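/- The difference operators D^{−(n)}_q(t), D^{(n)}_q(t_0,t_1;t), and D^{+(n)}_q(t_0,t_1,t_2,t_3;t) take BC_n-symmetric Laurent polynomials to BC_n-symmetric Laurent polynomials and act triangularly with respect to dominance of monomials; specifically, for any partition λ with at most n parts: D^{−(n)}_q(t) m_λ = q^{−|λ|/2} ∏_{1≤i≤n}(1 − q^{λ_i} t^{n−i}) m_{λ−1^n} plus a linear combination of m_μ with μ strictly dominated by λ−1^n (and the leading term is interpreted as 0 if λ_n = 0); D^{(n)}_q(t_0,t_1;t) m_λ = q^{−|λ|/2} ∏_{1≤i≤n}(1 − q^{λ_i} t^{n−i} t_0 t_1) m_λ plus a linear combination of m_μ with μ strictly dominated by λ; and D^{+(n)}_q(t_0,t_1,t_2,t_3;t) m_λ = q^{−|λ|/2} ∏_{1≤i≤n}(1 − q^{λ_i} t^{n−i} t_0 t_1 t_2 t_3) m_{λ+1^n} plus a linear combination of m_μ with μ strictly dominated by λ+1^n. -/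

import Mathlib

open scoped BigOperators
open Finset MeasureTheory

noncomputable section

/-- The infinite q-Pochhammer symbol `(x;q) = ∏_{j ≥ 0} (1 - q^j x)`. -/
def qPoch (x q : ℂ) : ℂ := ∏' j : ℕ, (1 - q ^ j * x)

/-- The finite q-Pochhammer symbol `(x;q)_k`. -/
def qPochFin (x q : ℂ) (k : ℕ) : ℂ := ∏ j ∈ Finset.range k, (1 - q ^ j * x)

/-- `(a z^{±1}; q) = (a z; q) (a z⁻¹; q)`. -/
def qPochPM (a z q : ℂ) : ℂ := qPoch (a * z) q * qPoch (a * z⁻¹) q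

/-- Normalized contour integral over the unit torus:
`∫_{T^n} F(z) ∏_i dz_i / (2 π √-1 z_i)`, parametrized by `z_i = exp(√-1 θ_i)`. -/
def torusAvg (n : ℕ) (F : (Fin n → ℂ) → ℂ) : ℂ :=
  ((2 * Real.pi : ℂ))⁻¹ ^ n *
    ∫ θ in Set.univ.pi fun _ : Fin n => Set.Ioc (0 : ℝ) (2 * Real.pi),
      F fun i => Complex.exp (Complex.I * (θ i : ℂ))

/-- The cross factor `(z w^{±1};q)(z⁻¹ w^{±1};q) / ((t z w^{±1};q)(t z⁻¹ w^{±1};q))`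
appearing in the Koornwinder density. -/
def koornCross (q t z w : ℂ) : ℂ :=
  (qPochPM z w q * qPochPM z⁻¹ w q) / (qPochPM (t * z) w q * qPochPM (t * z⁻¹) w q)

/-- The Koornwinder density `Δ^{(n)}(z; t₀,t₁,t₂,t₃; q,t)`. -/
def koornWeight (n : ℕ) (t0 t1 t2 t3 q t : ℂ) (z : Fin n → ℂ) : ℂ :=
  (∏ i, (qPoch ((z i) ^ 2) q * qPoch (((z i)⁻¹) ^ 2) q) /
      (qPochPM t0 (z i) q * qPochPM t1 (z i) q * qPochPM t2 (z i) q * qPochPM t3 (z i) q)) *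
  ∏ i, ∏ j, if i < j then koornCross q t (z i) (z j) else 1

/-- The (unnormalized) Koornwinder integral `⟨f⟩'^{(n)}_{t₀,t₁,t₂,t₃;q,t}`. -/
def koornInner' (n : ℕ) (t0 t1 t2 t3 q t : ℂ) (f : (Fin n → ℂ) → ℂ) : ℂ :=
  qPoch q q ^ n / (qPoch t q ^ n * 2 ^ n * (Nat.factorial n : ℂ)) *
    torusAvg n fun z => f z * koornWeight n t0 t1 t2 t3 q t z

/-- The normalized Koornwinder integral `⟨f⟩ = ⟨f⟩'/⟨1⟩'`. -/
def koornInner (n : ℕ) (t0 t1 t2 t3 q t : ℂ) (f : (Fin n → ℂ) → ℂ) : ℂ :=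
  koornInner' n t0 t1 t2 t3 q t f / koornInner' n t0 t1 t2 t3 q t fun _ => 1

/-- A function is a Laurent polynomial in `z₁, …, z_n` on nonzero arguments. -/
def IsLaurent (n : ℕ) (f : (Fin n → ℂ) → ℂ) : Prop :=
  ∃ c : (Fin n → ℤ) →₀ ℂ, ∀ z : Fin n → ℂ, (∀ i, z i ≠ 0) →
    f z = c.sum fun m a => a * ∏ i, z i ^ m i

/-- `BC_n`-symmetric Laurent polynomial: a Laurent polynomial invariant under permutations
of the variables and under each inversion `z_i ↦ z_i⁻¹`. -/
def IsBCSymmetric (n : ℕ) (f : (Fin n → ℂ) → ℂ) : Prop :=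
  IsLaurent n f ∧
  (∀ σ : Equiv.Perm (Fin n), ∀ z : Fin n → ℂ, (∀ i, z i ≠ 0) → f (z ∘ σ) = f z) ∧
  (∀ k : Fin n, ∀ z : Fin n → ℂ, (∀ i, z i ≠ 0) → f (Function.update z k (z k)⁻¹) = f z)

/-- The orbit of an exponent vector under signed permutations. -/
def signedOrbit (n : ℕ) (lam : Fin n → ℤ) : Finset (Fin n → ℤ) :=
  Finset.image
    (fun p : Equiv.Perm (Fin n) × (Fin n → Bool) =>
      fun i => if p.2 i then -lam (p.1 i) else lam (p.1 i))
    Finset.univ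

/-- The `BC_n`-symmetric monomial `m_λ`: the orbit sum of `∏ i, z_i^{λ_i}` under the
hyperoctahedral group. -/
def bcMono (n : ℕ) (lam : Fin n → ℤ) (z : Fin n → ℂ) : ℂ :=
  ∑ μ ∈ signedOrbit n lam, ∏ i, z i ^ μ i

/-- Natural-number exponent vectors coerced to integers. -/
def natToZ {n : ℕ} (lam : Fin n → ℕ) : Fin n → ℤ := fun i => (lam i : ℤ)

/-- `μ` is dominated by `λ`: all partial sums of `μ` are at most those of `λ`. -/
def Dominates {n : ℕ} (lam mu : Fin n → ℤ) : Prop :=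
  ∀ k : ℕ, (∑ i ∈ Finset.univ.filter fun i : Fin n => (i : ℕ) < k, mu i)
    ≤ ∑ i ∈ Finset.univ.filter fun i : Fin n => (i : ℕ) < k, lam i

/-- `μ` is strictly dominated by `λ`. -/
def StrictlyDominated {n : ℕ} (mu lam : Fin n → ℤ) : Prop :=
  Dominates lam mu ∧ mu ≠ lam

/-- A partition with at most `n` parts, recorded as a weakly decreasing vector. -/
def IsPartition {n : ℕ} (lam : Fin n → ℕ) : Prop := Antitone lam

/-- `K` is the Koornwinder polynomial `K^{(n)}_λ(·; t₀,t₁,t₂,t₃; q,t)`: a `BC_n`-symmetric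
Laurent polynomial of the form `m_λ` plus a combination of `m_μ` with `μ` strictly dominated
by `λ`, orthogonal to all strictly dominated monomials. -/
def IsKoornwinder (n : ℕ) (t0 t1 t2 t3 q t : ℂ) (lam : Fin n → ℕ)
    (K : (Fin n → ℂ) → ℂ) : Prop :=
  IsBCSymmetric n K ∧
  (∃ c : (Fin n → ℕ) →₀ ℂ,
    (∀ μ ∈ c.support, IsPartition μ ∧ StrictlyDominated (natToZ μ) (natToZ lam)) ∧
    ∀ z : Fin n → ℂ, (∀ i, z i ≠ 0) →
      K z = bcMono n (natToZ lam) z + c.sum fun μ a => a * bcMono n (natToZ μ) z) ∧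
  ∀ μ : Fin n → ℕ, IsPartition μ → StrictlyDominated (natToZ μ) (natToZ lam) →
    koornInner' n t0 t1 t2 t3 q t (fun z => K z * bcMono n (natToZ μ) z) = 0

/-- The principal specialization point `z_i = t^{n-i} a` (1-indexed). -/
def principalPt (n : ℕ) (t a : ℂ) : Fin n → ℂ := fun i => t ^ (n - 1 - (i : ℕ)) * a

/-- The normalized norm `N^{(n)}_λ` of a (candidate) Koornwinder polynomial. -/
def koornNorm (n : ℕ) (t0 t1 t2 t3 q t : ℂ) (K : (Fin n → ℂ) → ℂ) : ℂ :=
  koornInner n t0 t1 t2 t3 q t (fun z => K z * K z) / (K (principalPt n t t0)) ^ 2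

/-- Application of a sign vector: `z_i ↦ z_i⁻¹` where `ε_i` is true. -/
def signFlip {n : ℕ} (ε : Fin n → Bool) (z : Fin n → ℂ) : Fin n → ℂ :=
  fun i => if ε i then (z i)⁻¹ else z i

/-- The cross factor `∏_{i<j} (1 - t w_i w_j)/(1 - w_i w_j)`. -/
def crossFactor {n : ℕ} (t : ℂ) (w : Fin n → ℂ) : ℂ :=
  ∏ i, ∏ j, if i < j then (1 - t * w i * w j) / (1 - w i * w j) else 1

/-- Nondegeneracy conditions on `z` making all the difference-operator denominators nonzero. -/
def ZGood {n : ℕ} (z : Fin n → ℂ) : Prop :=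
  (∀ i, z i ≠ 0) ∧ (∀ i, (z i) ^ 2 ≠ 1) ∧
    ∀ i j : Fin n, i ≠ j → z i * z j ≠ 1 ∧ z i ≠ z j

/-- The lowering difference operator `D^{-(n)}_q(t)`, with `sq` a square root of `q`. -/
def Dminus (n : ℕ) (sq t : ℂ) (f : (Fin n → ℂ) → ℂ) (z : Fin n → ℂ) : ℂ :=
  ∑ ε : Fin n → Bool,
    (∏ i, signFlip ε z i / (1 - (signFlip ε z i) ^ 2)) *
      crossFactor t (signFlip ε z) * f fun i => sq * signFlip ε z i

/-- The difference operator `D^{(n)}_q(t₀,t₁;t)`, with `sq` a square root of `q`. -/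
def Dmid (n : ℕ) (sq t0 t1 t : ℂ) (f : (Fin n → ℂ) → ℂ) (z : Fin n → ℂ) : ℂ :=
  ∑ ε : Fin n → Bool,
    (∏ i, (1 - t0 * signFlip ε z i) * (1 - t1 * signFlip ε z i) / (1 - (signFlip ε z i) ^ 2)) *
      crossFactor t (signFlip ε z) * f fun i => sq * signFlip ε z i

/-- The raising difference operator `D^{+(n)}_q(t₀,t₁,t₂,t₃;t)`, with `sq` a square root of `q`. -/
def Dplus (n : ℕ) (sq t0 t1 t2 t3 t : ℂ) (f : (Fin n → ℂ) → ℂ) (z : Fin n → ℂ) : ℂ :=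
  ∑ ε : Fin n → Bool,
    (∏ i, (1 - t0 * signFlip ε z i) * (1 - t1 * signFlip ε z i) * (1 - t2 * signFlip ε z i) *
        (1 - t3 * signFlip ε z i) / (signFlip ε z i * (1 - (signFlip ε z i) ^ 2))) *
      crossFactor t (signFlip ε z) * f fun i => sq * signFlip ε z i

/-- The Gustafson-type integrand (without prefactor) with parameters `T_0, …, T_{N-1}`. -/
def gustafsonKernel (n N : ℕ) (q : ℂ) (T : Fin N → ℂ) (z : Fin n → ℂ) : ℂ :=
  (∏ i, ∏ j, if i < j then qPochPM (z i) (z j) q * qPochPM ((z i)⁻¹) (z j) q else 1) *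
    ∏ i, (qPoch ((z i) ^ 2) q * qPoch (((z i)⁻¹) ^ 2) q) / ∏ r, qPochPM (T r) (z i) q

/-- The density `κ(z)` of the integral operator `I^{*(n)}(q)`. -/
def IstarWeight (n N : ℕ) (q : ℂ) (T : Fin N → ℂ) (z : Fin n → ℂ) : ℂ :=
  (∏ r, ∏ s, if r < s then qPoch (T r * T s) q else 1) / qPoch (∏ r, T r) q *
    (qPoch q q ^ n / (2 ^ n * (Nat.factorial n : ℂ))) * gustafsonKernel n N q T z

/-- The integral operator `I^{*(n)}(q)` taking a `BC_n`-symmetric polynomial to a function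
of parameters `T_0, …, T_{N-1}` (with `N = 2n+2` in the main case). -/
def Istar (n N : ℕ) (q : ℂ) (f : (Fin n → ℂ) → ℂ) (T : Fin N → ℂ) : ℂ :=
  torusAvg n fun z => f z * IstarWeight n N q T z

/-- The integral operator `I^{+(n)}_t(q)`, with `st` a square root of `t`. -/
def Iplus (n : ℕ) (st q : ℂ) (f : (Fin n → ℂ) → ℂ) (z : Fin (n + 1) → ℂ) : ℂ :=
  Istar n (2 * n + 2) q f fun r =>
    if h : (r : ℕ) < n + 1 then st * z ⟨r, h⟩
    else st * (z ⟨(r : ℕ) - (n + 1), by have := r.isLt; omega⟩)⁻¹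

/-- The integral operator `I^{(n)}_t(t₀,t₁;q)`, with `st` a square root of `t`. -/
def Imid (n : ℕ) (st t0 t1 q : ℂ) (f : (Fin n → ℂ) → ℂ) (z : Fin n → ℂ) : ℂ :=
  Istar n (2 * n + 2) q f fun r =>
    if h0 : (r : ℕ) = 0 then t0
    else if h1 : (r : ℕ) = 1 then t1
    else if h : (r : ℕ) < n + 2 then st * z ⟨(r : ℕ) - 2, by omega⟩
    else st * (z ⟨(r : ℕ) - (n + 2), by have := r.isLt; omega⟩)⁻¹

/-- The integral operator `I^{-(n+1)}_t(t₀,t₁,t₂,t₃;q)` (input `BC_{n+1}`, output `BC_n`),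
with `st` a square root of `t`. -/
def Iminus (n : ℕ) (st t0 t1 t2 t3 q : ℂ) (f : (Fin (n + 1) → ℂ) → ℂ) (z : Fin n → ℂ) : ℂ :=
  Istar (n + 1) (2 * n + 4) q f fun r =>
    if h0 : (r : ℕ) = 0 then t0
    else if h1 : (r : ℕ) = 1 then t1
    else if h2 : (r : ℕ) = 2 then t2
    else if h3 : (r : ℕ) = 3 then t3
    else if h : (r : ℕ) < n + 4 then st * z ⟨(r : ℕ) - 4, by omega⟩
    else st * (z ⟨(r : ℕ) - (n + 4), by have := r.isLt; omega⟩)⁻¹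

/-- The conjugate partition: `conjPart λ i = λ'_i = #{j : λ_j ≥ i}` (for `i ≥ 1`). -/
def conjPart {n : ℕ} (lam : Fin n → ℕ) (i : ℕ) : ℕ :=
  (Finset.univ.filter fun j : Fin n => i ≤ lam j).card

/-- A partition with at most `n` parts viewed as one with at most `n+1` parts. -/
def padPart {n : ℕ} (lam : Fin n → ℕ) : Fin (n + 1) → ℕ :=
  fun i => if h : (i : ℕ) < n then lam ⟨i, h⟩ else 0

/-- The first `n` parts of a partition with at most `n+1` parts. -/
def truncPart {n : ℕ} (lam : Fin (n + 1) → ℕ) : Fin n → ℕ :=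
  fun i => lam i.castSucc

/-- The complementary partition `n^m - λ'` of `λ ⊆ m^n` inside the `m × n` box. -/
def boxCompl {n : ℕ} (m : ℕ) (lam : Fin n → ℕ) : Fin m → ℕ :=
  fun j => n - conjPart lam (m - (j : ℕ))

/-- The interaction kernel `∏_{i,j} (y_j + y_j⁻¹ - z_i - z_i⁻¹)`. -/
def interactionKernel (n m : ℕ) (z : Fin n → ℂ) (y : Fin m → ℂ) : ℂ :=
  ∏ i : Fin n, ∏ j : Fin m, (y j + (y j)⁻¹ - z i - (z i)⁻¹)

/-- The multivariate q-symbol `C⁰_λ(x;q,t)`. -/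
def C0 {n : ℕ} (lam : Fin n → ℕ) (x q t : ℂ) : ℂ :=
  ∏ i : Fin n, qPochFin (t⁻¹ ^ (i : ℕ) * x) q (lam i)

/-- The multivariate q-symbol `C⁻_λ(x;q,t)`. -/
def Cminus {n : ℕ} (lam : Fin n → ℕ) (x q t : ℂ) : ℂ :=
  ∏ i : Fin n, ∏ j : Fin n, if i ≤ j then
      qPochFin (t ^ ((j : ℕ) - (i : ℕ)) * x) q
          (lam i - (if h : (j : ℕ) + 1 < n then lam ⟨(j : ℕ) + 1, h⟩ else 0)) /
        qPochFin (t ^ ((j : ℕ) - (i : ℕ)) * x) q (lam i - lam j)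
    else 1

/-- The multivariate q-symbol `C⁺_λ(x;q,t)`. -/
def Cplus {n : ℕ} (lam : Fin n → ℕ) (x q t : ℂ) : ℂ :=
  ∏ i : Fin n, ∏ j : Fin n, if i ≤ j then
      qPochFin (t⁻¹ ^ ((i : ℕ) + (j : ℕ)) * x) q (lam i + lam j) /
        qPochFin (t⁻¹ ^ ((i : ℕ) + (j : ℕ)) * x) q
          (lam i + (if h : (j : ℕ) + 1 < n then lam ⟨(j : ℕ) + 1, h⟩ else 0))
    else 1

/-- `n(λ) = ∑ (i-1) λ_i`. -/
def nStat {n : ℕ} (lam : Fin n → ℕ) : ℕ := ∑ i : Fin n, (i : ℕ) * lam i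

/-- The symbol `Δ_λ(a | b₁, b₂, b₃, b₄; q, t)`. -/
def DeltaSym {n : ℕ} (lam : Fin n → ℕ) (a b1 b2 b3 b4 q t : ℂ) : ℂ :=
  ((q * a) ^ 2 / (b1 * b2 * b3 * b4)) ^ (∑ i, lam i) *
    (C0 lam b1 q t * C0 lam b2 q t * C0 lam b3 q t * C0 lam b4 q t) /
    (C0 lam (q * a / b1) q t * C0 lam (q * a / b2) q t * C0 lam (q * a / b3) q t *
      C0 lam (q * a / b4) q t) *
  (t ^ (2 * nStat lam) * (t / (q * a)) ^ (∑ i, lam i) *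
      (∏ i : Fin n, qPochFin (t⁻¹ ^ (2 * (i : ℕ)) * (q * a)) q (2 * lam i) *
        qPochFin (t⁻¹ ^ (2 * (i : ℕ) + 1) * (q * a)) q (2 * lam i)) /
    (Cminus lam q q t * Cminus lam t q t * Cplus lam a q t * Cplus lam (q * a / t) q t))

end
/-- `F` equals `lead · m_{λ}` plus a linear combination of monomials `m_μ` with `μ`
strictly dominated by `λ` (as an identity of rational functions). -/
def ExpandsWithLead (n : ℕ) (F : (Fin n → ℂ) → ℂ) (lead : ℂ) (lamZ : Fin n → ℤ) : Prop :=
  ∃ c : (Fin n → ℕ) →₀ ℂ,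
    (∀ μ ∈ c.support, IsPartition μ ∧ StrictlyDominated (natToZ μ) lamZ) ∧
    ∀ z : Fin n → ℂ, ZGood z →
      F z = lead * bcMono n lamZ z + c.sum fun μ a => a * bcMono n (natToZ μ) z

/-!
The product of `D f` with the Weyl denominator of type `C_n`, which is alternating under the
hyperoctahedral group, is the signed sum over all inversions of variables of a Laurent polynomial
that is alternating under permutations. A signed sum over the whole hyperoctahedral group is a
linear combination of determinants of `z_i^{k_j} - z_i^{-k_j}`; this is `z_i - z_i⁻¹` times a
polynomial in `z_i + z_i⁻¹`, so that the determinant is divisible by the Weyl denominator. Hence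
`D f` is a Laurent polynomial, and the signs cancel to make it invariant.

Dominance is the componentwise order on partial sums of exponents, for which leading exponents add
under multiplication. The leading coefficient of `D m_λ` can therefore be computed before dividing,
where each choice of inversions contributes a product over the variables, and the sum over the
choices factors as `∏ i, (s^{-λ_i} - s^{λ_i} t^{n-i} ∏ r, τ_r)` with `s² = q`. When all exponents of
the expected leading monomial are lowered by one and `λ_n = 0`, the factor `i = n` vanishes.
-/

namespace BCLaurent

open Function
open LaurentPolynomial (T)
open scoped AddMonoidAlgebra LaurentPolynomial

section Vandermonde

open Polynomial
open LaurentPolynomial (T_add)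

variable {R : Type*} [CommRing R]

theorem det_vandermonde_dvd_det_eval {n : ℕ} (x : Fin n → R) (Q : Fin n → R[X]) :
    (Matrix.vandermonde x).det ∣ (Matrix.of fun i j => (Q j).eval (x i)).det := by
  nontriviality R
  let P : R[X] := ∏ i, (X - C (x i))
  have hP : P.Monic := monic_prod_of_monic _ _ fun i _ => monic_X_sub_C _
  have natDegree_P : P.natDegree = n := by simp [P, natDegree_prod_of_monic, monic_X_sub_C]
  have factor : (Matrix.of fun i j => (Q j).eval (x i)) =
      Matrix.vandermonde x * Matrix.of fun (k : Fin n) j => (Q j %ₘ P).coeff k := by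
    ext i j
    have root : P.eval (x i) = 0 := by
      simpa [P, eval_prod] using prod_eq_zero (mem_univ i) (sub_self (x i))
    have degree_lt : (Q j %ₘ P).natDegree < n := by
      rw [← natDegree_P]
      refine natDegree_modByMonic_lt _ hP fun h => ?_
      rw [h, eval_one] at root
      exact one_ne_zero root
    have eval_eq : (Q j %ₘ P).eval (x i) = (Q j).eval (x i) :=
      eval₂_modByMonic_eq_self_of_root (f := RingHom.id R) root
    simp [Matrix.mul_apply, ← eval_eq, eval_eq_sum_range' degree_lt, sum_range, mul_comm]
  rw [factor, Matrix.det_mul]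
  exact dvd_mul_right _ _

theorem prod_Ioi_sub_dvd_det_vandermonde {n : ℕ} (x : Fin n → R) :
    (∏ i, ∏ j ∈ Ioi i, (x i - x j)) ∣ (Matrix.vandermonde x).det := by
  rw [Matrix.det_vandermonde]
  refine prod_dvd_prod_of_dvd _ _ fun i _ => prod_dvd_prod_of_dvd _ _ fun j _ => ?_
  rw [← neg_dvd, neg_sub]

theorem T_sub_T_neg (k : ℤ) :
    (T k - T (-k) : R[T;T⁻¹]) = (T 1 - T (-1)) * aeval (T 1 + T (-1)) (Chebyshev.S R (k - 1)) := by
  induction k using Chebyshev.induct' with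
  | zero => simp
  | one => simp
  | add_two k ih1 ih0 =>
    have recurrence (m : ℤ) : (T (m + 2) - T (-(m + 2)) : R[T;T⁻¹]) =
        (T 1 + T (-1)) * (T (m + 1) - T (-(m + 1))) - (T m - T (-m)) := by
      simp only [mul_sub, add_mul, ← T_add]
      ring_nf
    have chebyshev : Chebyshev.S R ((k : ℤ) + 2 - 1) =
        X * Chebyshev.S R ((k : ℤ) + 1 - 1) - Chebyshev.S R ((k : ℤ) - 1) := by
      rw [show (k : ℤ) + 2 - 1 = k + 1 by ring, Chebyshev.S_add_one, add_sub_cancel_right]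
    rw [recurrence, ih1, ih0, chebyshev, map_sub, map_mul, aeval_X]
    ring
  | neg k ih =>
    rw [neg_neg, ← neg_sub, ih, Chebyshev.S_neg_sub_one, map_neg]
    ring

end Vandermonde

section HasLead

variable {R A B : Type*} [CommRing R] [AddCommMonoid A] [AddCommMonoid B] [PartialOrder B]
  {φ : A →+ B} {r s : R[A]} {κ κ' : A} {c c' : R}

/-- `HasLead φ r κ c`: the exponents of the monomials of `r` are at most `κ` in the order pulled
back along `φ`, and the monomial `κ` has coefficient `c` in `r`, which may be zero. -/
def HasLead (φ : A →+ B) (r : R[A]) (κ : A) (c : R) : Prop :=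
  (∀ α, r.coeff α ≠ 0 → φ α ≤ φ κ) ∧ r.coeff κ = c

namespace HasLead

theorem zero : HasLead φ (0 : R[A]) κ 0 := ⟨fun _ h => absurd rfl h, rfl⟩

theorem add (hr : HasLead φ r κ c) (hs : HasLead φ s κ c') : HasLead φ (r + s) κ (c + c') := by
  refine ⟨fun α h => ?_, by simp [hr.2, hs.2]⟩
  by_contra hα
  exact h (by simp [not_not.1 (mt (hr.1 α) hα), not_not.1 (mt (hs.1 α) hα)])

theorem sum {ι : Type*} {S : Finset ι} {r : ι → R[A]} {c : ι → R}
    (h : ∀ i ∈ S, HasLead φ (r i) κ (c i)) : HasLead φ (∑ i ∈ S, r i) κ (∑ i ∈ S, c i) := by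
  classical
  induction S using Finset.induction_on with
  | empty => exact zero
  | insert i S hi ih =>
    rw [sum_insert hi, sum_insert hi]
    exact (h i (mem_insert_self i S)).add (ih fun j hj => h j (mem_insert_of_mem hj))

theorem smul {M : Type*} [SMulZeroClass M R] (a : M) (hr : HasLead φ r κ c) :
    HasLead φ (a • r) κ (a • c) :=
  ⟨fun α h => hr.1 α fun h0 => h (by simp [h0]), by simp [hr.2]⟩

theorem sub (hr : HasLead φ r κ c) (hs : HasLead φ s κ c') : HasLead φ (r - s) κ (c - c') := by
  simpa [sub_eq_add_neg] using hr.add (hs.smul (-1 : ℤ))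

theorem single (κ : A) (a : R) : HasLead φ (.single κ a) κ a := by
  classical
  refine ⟨fun α h => ?_, by simp⟩
  rw [AddMonoidAlgebra.coeff_single, Finsupp.single_apply] at h
  rw [(ite_ne_right_iff.1 h).1]

theorem one : HasLead φ (1 : R[A]) 0 1 := single 0 1

theorem of_lt (hr : HasLead φ r κ c) (h : φ κ < φ κ') : HasLead φ r κ' 0 :=
  ⟨fun α hα => (hr.1 α hα).trans h.le, by_contra fun hκ' => (hr.1 κ' hκ').not_gt h⟩

variable [IsOrderedCancelAddMonoid B]

theorem mul (hφ : Injective φ) (hr : HasLead φ r κ c) (hs : HasLead φ s κ' c') :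
    HasLead φ (r * s) (κ + κ') (c * c') := by
  classical
  constructor
  · intro α h
    obtain ⟨β, hβ, γ, hγ, rfl⟩ := Finset.mem_add.1
      (AddMonoidAlgebra.support_coeff_mul_subset _ _ (Finsupp.mem_support_iff.2 h))
    rw [map_add, map_add]
    exact add_le_add (hr.1 β (Finsupp.mem_support_iff.1 hβ)) (hs.1 γ (Finsupp.mem_support_iff.1 hγ))
  · have unique : UniqueAdd r.coeff.support s.coeff.support κ κ' := fun α β hα hβ h => by
      have h' := (add_eq_add_iff_eq_and_eq (hr.1 α (Finsupp.mem_support_iff.1 hα))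
        (hs.1 β (Finsupp.mem_support_iff.1 hβ))).1 (by rw [← map_add, h, map_add])
      exact ⟨hφ h'.1, hφ h'.2⟩
    rw [AddMonoidAlgebra.coeff_mul_add_of_uniqueAdd unique, hr.2, hs.2]

theorem prod (hφ : Injective φ) {ι : Type*} {S : Finset ι} {r : ι → R[A]} {κ : ι → A} {c : ι → R}
    (h : ∀ i ∈ S, HasLead φ (r i) (κ i) (c i)) :
    HasLead φ (∏ i ∈ S, r i) (∑ i ∈ S, κ i) (∏ i ∈ S, c i) := by
  classical
  induction S using Finset.induction_on with
  | empty => exact one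
  | insert i S hi ih =>
    rw [prod_insert hi, sum_insert hi, prod_insert hi]
    exact (h i (mem_insert_self i S)).mul hφ (ih fun j hj => h j (mem_insert_of_mem hj))

theorem of_mul_left (hφ : Injective φ) (hr : HasLead φ r κ 1)
    (hrs : HasLead φ (r * s) (κ + κ') c) : HasLead φ s κ' c := by
  classical
  have support_le (β : A) (hβ : s.coeff β ≠ 0) : φ β ≤ φ κ' := by
    obtain ⟨_, hle, hmax⟩ := (s.coeff.support.image φ).exists_le_maximal
      (mem_image_of_mem φ (Finsupp.mem_support_iff.2 hβ))
    obtain ⟨β', hβ', rfl⟩ := mem_image.1 hmax.prop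
    have unique : UniqueAdd r.coeff.support s.coeff.support κ β' := fun a b ha hb h => by
      have hab : φ a + φ b = φ κ + φ β' := by rw [← map_add, h, map_add]
      have ha' : φ a ≤ φ κ := hr.1 a (Finsupp.mem_support_iff.1 ha)
      have hb' : φ β' ≤ φ b := le_of_add_le_add_left (hab.symm.le.trans (add_le_add_left ha' _))
      have hbβ : b = β' := hφ ((hmax.le_of_ge (mem_image_of_mem φ hb) hb').antisymm hb')
      exact ⟨hφ (add_right_cancel (hbβ ▸ hab)), hbβ⟩
    have coeff_ne : (r * s).coeff (κ + β') ≠ 0 := by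
      rw [AddMonoidAlgebra.coeff_mul_add_of_uniqueAdd unique, hr.2, one_mul]
      exact Finsupp.mem_support_iff.1 hβ'
    have := hrs.1 _ coeff_ne
    rw [map_add, map_add] at this
    exact hle.trans (le_of_add_le_add_left this)
  refine ⟨support_le, ?_⟩
  simpa [hrs.2] using (hr.mul hφ (⟨support_le, rfl⟩ : HasLead φ s κ' _)).2.symm

end HasLead

end HasLead

section LaurentRing

variable {R ι : Type*} [CommRing R]

/-- The Laurent polynomial `p(z_i)` in the variables indexed by `ι`, for `p` in one variable. Here
and below, `R[ι → ℤ]` encodes the ring of Laurent polynomials in the variables `z_i`. -/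
noncomputable def inVar [DecidableEq ι] (i : ι) : R[T;T⁻¹] →ₐ[R] R[ι → ℤ] :=
  AddMonoidAlgebra.mapDomainAlgHom R R (AddMonoidHom.single (fun _ : ι => ℤ) i)

/-- The evaluation of Laurent polynomials at a point `u` whose coordinates are units. -/
noncomputable def eval [Fintype ι] (u : ι → Rˣ) : R[ι → ℤ] →ₐ[R] R :=
  AddMonoidAlgebra.lift R R (ι → ℤ)
    { toFun := fun α => ((∏ i, u i ^ α.toAdd i : Rˣ) : R)
      map_one' := by simp
      map_mul' := fun α β => by simp [zpow_add, prod_mul_distrib] }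

/-- The substitution `z_i ↦ z_{σ⁻¹ i}`, which turns the exponent vector `α` into `α ∘ σ`. -/
noncomputable def permVars (σ : Equiv.Perm ι) : R[ι → ℤ] ≃ₐ[R] R[ι → ℤ] :=
  AddMonoidAlgebra.domCongr R R (LinearEquiv.funCongrLeft ℤ ℤ σ).toAddEquiv

/-- The negation of the entries of an exponent vector at the places where `ε` is true. -/
def negOn (ε : ι → Bool) : (ι → ℤ) ≃+ (ι → ℤ) :=
  AddEquiv.piCongrRight fun i => if ε i then AddEquiv.neg ℤ else AddEquiv.refl ℤ

/-- The substitution `z_i ↦ z_i⁻¹` in the variables for which `ε i` is true. -/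
noncomputable def invertVars (ε : ι → Bool) : R[ι → ℤ] ≃ₐ[R] R[ι → ℤ] :=
  AddMonoidAlgebra.domCongr R R (negOn ε)

/-- The substitution `z_i ↦ s z_i`. -/
noncomputable def scaleVars [Fintype ι] (s : Rˣ) : R[ι → ℤ] →ₐ[R] R[ι → ℤ] :=
  AddMonoidAlgebra.lift R _ (ι → ℤ)
    { toFun := fun α => .single α.toAdd ((∏ i, s ^ α.toAdd i : Rˣ) : R)
      map_one' := by simp [AddMonoidAlgebra.one_def]
      map_mul' := fun α β => by
        simp [AddMonoidAlgebra.single_mul_single, zpow_add, prod_mul_distrib] }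

theorem negOn_apply (ε : ι → Bool) (α : ι → ℤ) (i : ι) :
    negOn ε α i = if ε i then -α i else α i := by
  simp only [negOn, AddEquiv.piCongrRight_apply]
  split <;> rfl

theorem negOn_negOn (δ ε : ι → Bool) (α : ι → ℤ) :
    negOn δ (negOn ε α) = negOn (fun i => xor (δ i) (ε i)) α := by
  ext i
  cases hδ : δ i <;> cases hε : ε i <;> simp [negOn_apply, hδ, hε]

theorem negOn_symm (ε : ι → Bool) : (negOn ε).symm = negOn ε := by
  ext α i
  simp only [negOn, AddEquiv.piCongrRight_symm, AddEquiv.piCongrRight_apply]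
  split <;> rfl

theorem negOn_negOn_self (ε : ι → Bool) (α : ι → ℤ) : negOn ε (negOn ε α) = α := by
  nth_rw 1 [← negOn_symm]
  exact (negOn ε).symm_apply_apply α

theorem negOn_single [DecidableEq ι] (ε : ι → Bool) (i : ι) (k : ℤ) :
    negOn ε (Pi.single i k) = Pi.single i (if ε i then -k else k) := by
  ext j
  obtain rfl | h := eq_or_ne j i <;> simp [negOn_apply, *]

theorem inVar_single [DecidableEq ι] (i : ι) (k : ℤ) (a : R) :
    inVar i (.single k a) = .single (Pi.single i k) a :=
  AddMonoidAlgebra.mapDomain_single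

theorem eval_single [Fintype ι] (u : ι → Rˣ) (α : ι → ℤ) (a : R) :
    eval u (.single α a) = a * (∏ i, u i ^ α i : Rˣ) := by
  simp [eval]

theorem permVars_single (σ : Equiv.Perm ι) (α : ι → ℤ) (a : R) :
    permVars σ (.single α a) = .single (α ∘ σ) a :=
  AddMonoidAlgebra.domCongr_single ..

theorem invertVars_single (ε : ι → Bool) (α : ι → ℤ) (a : R) :
    invertVars ε (.single α a) = .single (negOn ε α) a := by
  simp [invertVars]

theorem scaleVars_single [Fintype ι] (s : Rˣ) (α : ι → ℤ) (a : R) :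
    scaleVars s (.single α a) = .single α (a * (∏ i, s ^ α i : Rˣ)) := by
  simp [scaleVars]

theorem coeff_permVars (σ : Equiv.Perm ι) (r : R[ι → ℤ]) (α : ι → ℤ) :
    (permVars σ r).coeff α = r.coeff (α ∘ σ.symm) := by
  rw [permVars, AddMonoidAlgebra.coeff_domCongr]
  rfl

theorem coeff_invertVars (ε : ι → Bool) (r : R[ι → ℤ]) (α : ι → ℤ) :
    (invertVars ε r).coeff α = r.coeff (negOn ε α) := by
  rw [invertVars, AddMonoidAlgebra.coeff_domCongr, negOn_symm]

theorem coeff_scaleVars [Fintype ι] (s : Rˣ) (r : R[ι → ℤ]) (α : ι → ℤ) :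
    (scaleVars s r).coeff α = r.coeff α * (∏ i, s ^ α i : Rˣ) := by
  classical
  induction r using AddMonoidAlgebra.induction_linear with
  | zero => simp
  | add f g hf hg => simp [hf, hg, add_mul]
  | single β a =>
    obtain rfl | h := eq_or_ne β α <;> simp [scaleVars_single, *]

theorem permVars_permVars (σ τ : Equiv.Perm ι) (r : R[ι → ℤ]) :
    permVars σ (permVars τ r) = permVars (τ * σ) r := by
  ext α
  rw [coeff_permVars, coeff_permVars, coeff_permVars]
  rfl

theorem invertVars_invertVars (δ ε : ι → Bool) (r : R[ι → ℤ]) :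
    invertVars δ (invertVars ε r) = invertVars (fun i => xor (δ i) (ε i)) r := by
  ext α
  simp only [coeff_invertVars, negOn_negOn, Bool.xor_comm]

theorem permVars_invertVars (σ : Equiv.Perm ι) (ε : ι → Bool) (r : R[ι → ℤ]) :
    permVars σ (invertVars ε r) = invertVars (ε ∘ σ) (permVars σ r) := by
  ext α
  rw [coeff_permVars, coeff_invertVars, coeff_invertVars, coeff_permVars]
  congr 1
  ext i
  simp [negOn_apply]

theorem permVars_scaleVars [Fintype ι] (σ : Equiv.Perm ι) (s : Rˣ) (r : R[ι → ℤ]) :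
    permVars σ (scaleVars s r) = scaleVars s (permVars σ r) := by
  ext α
  simp only [coeff_permVars, coeff_scaleVars, comp_apply, Equiv.prod_comp σ.symm fun i => s ^ α i]

theorem permVars_inVar [DecidableEq ι] (σ : Equiv.Perm ι) (i : ι) (p : R[T;T⁻¹]) :
    permVars σ (inVar i p) = inVar (σ⁻¹ i) p := by
  induction p using AddMonoidAlgebra.induction_linear with
  | zero => simp
  | add f g hf hg => simp [hf, hg]
  | single k a =>
    rw [inVar_single, inVar_single, permVars_single, Pi.single_comp_equiv]
    rfl

theorem invertVars_inVar [DecidableEq ι] (ε : ι → Bool) (i : ι) (p : R[T;T⁻¹]) :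
    invertVars ε (inVar i p) = inVar i (if ε i then LaurentPolynomial.invert p else p) := by
  induction p using AddMonoidAlgebra.induction_linear with
  | zero => simp
  | add f g hf hg => split_ifs at hf hg ⊢ <;> simp [hf, hg]
  | single k a =>
    rw [inVar_single, invertVars_single, negOn_single]
    split
    · rw [LaurentPolynomial.invert, AddMonoidAlgebra.domCongr_single, inVar_single]
      rfl
    · rw [inVar_single]

theorem eval_permVars [Fintype ι] (u : ι → Rˣ) (σ : Equiv.Perm ι) (r : R[ι → ℤ]) :
    eval u (permVars σ r) = eval (u ∘ σ.symm) r := by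
  induction r using AddMonoidAlgebra.induction_linear with
  | zero => simp
  | add f g hf hg => simp [hf, hg]
  | single α a =>
    rw [permVars_single, eval_single, eval_single,
      ← Equiv.prod_comp σ fun i => (u ∘ σ.symm) i ^ α i]
    simp

theorem eval_invertVars [Fintype ι] (u : ι → Rˣ) (ε : ι → Bool) (r : R[ι → ℤ]) :
    eval u (invertVars ε r) = eval (fun i => if ε i then (u i)⁻¹ else u i) r := by
  induction r using AddMonoidAlgebra.induction_linear with
  | zero => simp
  | add f g hf hg => simp [hf, hg]
  | single α a =>
    rw [invertVars_single, eval_single, eval_single]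
    congr 2
    refine prod_congr rfl fun i _ => ?_
    rw [negOn_apply]
    split <;> simp

theorem eval_scaleVars [Fintype ι] (u : ι → Rˣ) (s : Rˣ) (r : R[ι → ℤ]) :
    eval u (scaleVars s r) = eval (fun i => s * u i) r := by
  induction r using AddMonoidAlgebra.induction_linear with
  | zero => simp
  | add f g hf hg => simp [hf, hg]
  | single α a =>
    rw [scaleVars_single, eval_single, eval_single, mul_assoc, ← Units.val_mul]
    simp only [mul_zpow, prod_mul_distrib]

theorem eval_inVar [Fintype ι] [DecidableEq ι] (u : ι → Rˣ) (i : ι) (p : R[T;T⁻¹]) :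
    eval u (inVar i p) = LaurentPolynomial.eval₂ (RingHom.id R) (u i) p := by
  induction p using AddMonoidAlgebra.induction_linear with
  | zero => simp
  | add f g hf hg => simp [hf, hg]
  | single k a =>
    rw [inVar_single, eval_single, LaurentPolynomial.single_eq_C_mul_T,
      LaurentPolynomial.eval₂_C_mul_T, RingHom.id_apply, Fintype.prod_eq_single i]
    · simp
    · intro j hj
      simp [hj]

end LaurentRing

section Alternation

variable {R ι : Type*} [CommRing R] [Fintype ι]

/-- The determinant of the sign change of the variables for which `ε i` is true. -/
def signOf (ε : ι → Bool) : ℤˣ := ∏ i, if ε i then -1 else 1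

variable (R) in
/-- The signed sum `∑ ε, sign(ε) r(z^ε)` over all inversions of variables. -/
noncomputable def alternation [DecidableEq ι] : R[ι → ℤ] →ₗ[R] R[ι → ℤ] :=
  ∑ ε, signOf ε • (invertVars ε).toLinearMap

theorem signOf_xor (δ ε : ι → Bool) :
    signOf (fun i => xor (δ i) (ε i)) = signOf δ * signOf ε := by
  simp only [signOf, ← prod_mul_distrib]
  refine prod_congr rfl fun i _ => ?_
  by_cases hδ : δ i <;> by_cases hε : ε i <;> simp [hδ, hε]

variable [DecidableEq ι]

theorem alternation_apply (r : R[ι → ℤ]) :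
    alternation R r = ∑ ε, signOf ε • invertVars ε r := by
  simp [alternation, LinearMap.sum_apply]

theorem invertVars_alternation (δ : ι → Bool) (r : R[ι → ℤ]) :
    invertVars δ (alternation R r) = signOf δ • alternation R r := by
  have involutive : Involutive fun (ε : ι → Bool) i => xor (δ i) (ε i) := fun ε => by
    simp
  simp only [alternation_apply, smul_sum, Units.smul_def, map_sum, map_zsmul, invertVars_invertVars]
  rw [← Equiv.sum_comp involutive.toPerm]
  refine sum_congr rfl fun ε _ => ?_
  simp [← Units.smul_def, smul_smul, ← signOf_xor]

theorem permVars_alternation (σ : Equiv.Perm ι) (r : R[ι → ℤ]) :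
    permVars σ (alternation R r) = alternation R (permVars σ r) := by
  simp only [alternation_apply, Units.smul_def, map_sum, map_zsmul, permVars_invertVars]
  rw [← Equiv.sum_comp (σ.symm.arrowCongr (Equiv.refl Bool)) fun ε =>
    ((signOf ε : ℤˣ) : ℤ) • invertVars ε (permVars σ r)]
  refine sum_congr rfl fun ε _ => ?_
  congr 2
  exact (Equiv.prod_comp σ fun i => if ε i then (-1 : ℤˣ) else 1).symm

theorem alternation_single (κ : ι → ℤ) (a : R) :
    alternation R (.single κ a) = a • ∏ i, inVar i (T (κ i) - T (-κ i) : R[T;T⁻¹]) := by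
  have factor (i : ι) : inVar i (T (κ i) - T (-κ i) : R[T;T⁻¹]) = ∑ b : Bool,
      AddMonoidAlgebra.single (Pi.single i (if b then -κ i else κ i)) (if b then -1 else 1) := by
    rw [map_sub, Fintype.sum_bool, LaurentPolynomial.T, LaurentPolynomial.T, inVar_single,
      inVar_single]
    simp [AddMonoidAlgebra.single_neg, sub_eq_neg_add]
  simp only [factor, Fintype.prod_sum, AddMonoidAlgebra.prod_single, Finset.univ_sum_single]
  rw [alternation_apply, smul_sum]
  refine sum_congr rfl fun ε _ => ?_
  rw [invertVars_single, AddMonoidAlgebra.smul_single, AddMonoidAlgebra.smul_single]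
  congr 1
  · ext i
    exact negOn_apply ε κ i
  · rw [Units.smul_def, zsmul_eq_mul, smul_eq_mul, mul_comm, signOf, Units.coe_prod, Int.cast_prod]
    congr! 2 with i
    split <;> simp

end Alternation

section WeylDenominator

variable {R : Type*} [CommRing R] {n : ℕ}

/-- The Laurent polynomial `z⁻¹ + t z`. The cross factor `(1 - t z w) / (1 - z w)` is the difference
of its values at `z` and `w`, divided by that difference for `t = 1`. -/
noncomputable def invAddMul (t : R) : R[T;T⁻¹] := T (-1) + t • T 1

/-- The Vandermonde product `∏_{i<j} (y(z_i) - y(z_j))`. -/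
noncomputable def vandermondeProd (y : R[T;T⁻¹]) : R[Fin n → ℤ] :=
  ∏ i, ∏ j ∈ Ioi i, (inVar i y - inVar j y)

variable (R n) in
/-- The Weyl denominator of type `C_n`. -/
noncomputable def weylDenom : R[Fin n → ℤ] :=
  (∏ i, inVar i (T 1 - T (-1))) * vandermondeProd (T 1 + T (-1))

theorem permVars_vandermondeProd (σ : Equiv.Perm (Fin n)) (y : R[T;T⁻¹]) :
    permVars σ (vandermondeProd y) = Equiv.Perm.sign σ • vandermondeProd y := by
  simp only [vandermondeProd, map_prod, map_sub, permVars_inVar]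
  rw [Equiv.Perm.prod_Ioi_comp_eq_sign_mul_prod σ⁻¹ (f := fun i j => inVar i y - inVar j y)
    fun i j => by ring, Equiv.Perm.sign_inv, Units.smul_def, zsmul_eq_mul]

theorem permVars_weylDenom (σ : Equiv.Perm (Fin n)) :
    permVars σ (weylDenom R n) = Equiv.Perm.sign σ • weylDenom R n := by
  simp only [weylDenom, map_mul, map_prod, permVars_inVar, permVars_vandermondeProd]
  rw [Equiv.prod_comp σ⁻¹ fun i => inVar i (T 1 - T (-1)), mul_smul_comm]

theorem invertVars_weylDenom (ε : Fin n → Bool) :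
    invertVars ε (weylDenom R n) = signOf ε • weylDenom R n := by
  have prefactor (i : Fin n) : inVar i (if ε i then LaurentPolynomial.invert (T 1 - T (-1))
      else (T 1 - T (-1)) : R[T;T⁻¹]) = (if ε i then -1 else 1 : ℤˣ) • inVar i (T 1 - T (-1)) := by
    split <;> simp [Units.smul_def]
  have cross (i : Fin n) : (if ε i then LaurentPolynomial.invert (T 1 + T (-1)) else T 1 + T (-1) :
      R[T;T⁻¹]) = T 1 + T (-1) := by
    split <;> simp [add_comm]
  simp only [weylDenom, vandermondeProd, map_mul, map_prod, map_sub (invertVars ε),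
    invertVars_inVar, prefactor, cross, prod_smul]
  rw [signOf, smul_mul_assoc]

theorem weylDenom_dvd_det (κ : Fin n → ℤ) :
    weylDenom R n ∣ (Matrix.of fun i j => inVar i (T (κ j) - T (-κ j) : R[T;T⁻¹])).det := by
  let x (i : Fin n) : R[Fin n → ℤ] := inVar i (T 1 + T (-1))
  let Q (j : Fin n) := (Polynomial.Chebyshev.S R (κ j - 1)).map (algebraMap R R[Fin n → ℤ])
  have entry (i j : Fin n) : inVar i (T (κ j) - T (-κ j) : R[T;T⁻¹]) =
      inVar i (T 1 - T (-1)) * (Matrix.of fun i j => (Q j).eval (x i)) i j := by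
    rw [T_sub_T_neg, map_mul, ← Polynomial.aeval_algHom_apply, Polynomial.aeval_def,
      Polynomial.eval₂_eq_eval_map, Matrix.of_apply]
  simp only [entry, Matrix.det_mul_column]
  exact mul_dvd_mul_left _
    ((prod_Ioi_sub_dvd_det_vandermonde x).trans (det_vandermonde_dvd_det_eval x Q))

theorem weylDenom_dvd_sum_sign_smul (r : R[Fin n → ℤ]) :
    weylDenom R n ∣ ∑ σ, Equiv.Perm.sign σ • alternation R (permVars σ r) := by
  induction r using AddMonoidAlgebra.induction_linear with
  | zero => simp
  | add r s hr hs =>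
    simp only [map_add, smul_add, sum_add_distrib]
    exact dvd_add hr hs
  | single κ a =>
    have h := weylDenom_dvd_det (R := R) κ
    rw [← Matrix.det_transpose, Matrix.det_apply] at h
    simp only [permVars_single, alternation_single, smul_comm _ a, ← smul_sum]
    exact h.trans (dvd_smul_of_dvd _ dvd_rfl)

theorem weylDenom_dvd_alternation {k : Type*} [Field k] [CharZero k] {r : k[Fin n → ℤ]}
    (hr : ∀ σ, permVars σ r = Equiv.Perm.sign σ • r) : weylDenom k n ∣ alternation k r := by
  have card_ne : (Fintype.card (Equiv.Perm (Fin n)) : k) ≠ 0 :=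
    Nat.cast_ne_zero.2 Fintype.card_ne_zero
  have h := weylDenom_dvd_sum_sign_smul r
  simp only [hr, Units.smul_def, map_zsmul, smul_smul, ← Units.val_mul, Int.units_mul_self,
    Units.val_one, one_smul, sum_const, card_univ, ← Nat.cast_smul_eq_nsmul k] at h
  simpa [smul_smul, card_ne] using dvd_smul_of_dvd (Fintype.card (Equiv.Perm (Fin n)) : k)⁻¹ h

end WeylDenominator

section PartialSums

variable {R : Type*} [CommRing R] {n : ℕ}

variable (n) in
/-- The partial sums of an exponent vector, so that `Dominates κ α` means
`partialSums n α ≤ partialSums n κ`. -/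
def partialSums : (Fin n → ℤ) →+ (ℕ → ℤ) where
  toFun α k := ∑ i ∈ univ.filter fun i : Fin n => (i : ℕ) < k, α i
  map_zero' := by ext; simp
  map_add' α β := by ext; simp [sum_add_distrib]

theorem partialSums_apply (α : Fin n → ℤ) (k : ℕ) :
    partialSums n α k = ∑ i ∈ univ.filter fun i : Fin n => (i : ℕ) < k, α i := rfl

theorem partialSums_succ (α : Fin n → ℤ) (i : Fin n) :
    partialSums n α (i + 1) = partialSums n α i + α i := by
  have filter_lt_succ : univ.filter (fun j : Fin n => (j : ℕ) < i + 1) =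
      insert i (univ.filter fun j : Fin n => (j : ℕ) < i) := by
    ext j
    simp [le_iff_eq_or_lt, Fin.ext_iff]
  rw [partialSums_apply, filter_lt_succ, sum_insert (by simp), add_comm, partialSums_apply]

theorem partialSums_injective : Injective (partialSums n) := by
  intro α β h
  ext i
  rw [← add_right_inj (partialSums n α i), ← partialSums_succ, h, partialSums_succ]

theorem partialSums_single (i : Fin n) (a : ℤ) (k : ℕ) :
    partialSums n (Pi.single i a) k = if (i : ℕ) < k then a else 0 := by
  rw [partialSums_apply, sum_filter, Fintype.sum_eq_single i fun j hj => by simp [hj],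
    Pi.single_eq_same]

theorem partialSums_single_lt {i j : Fin n} (h : i < j) :
    partialSums n (Pi.single j 1) < partialSums n (Pi.single i 1) := by
  refine lt_of_le_of_ne (fun k => ?_) fun h' => h.ne' ?_
  · have : (i : ℕ) < j := h
    rw [partialSums_single, partialSums_single]
    split_ifs <;> lia
  · by_contra hij
    simpa [hij] using congrFun (partialSums_injective h') i

theorem HasLead.inVar {p : R[T;T⁻¹]} {k : ℤ} {c : R} (hp : HasLead (AddMonoidHom.id ℤ) p k c)
    (i : Fin n) : HasLead (partialSums n) (inVar i p) (Pi.single i k) c := by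
  classical
  constructor
  · intro α hα
    obtain ⟨m, hm, rfl⟩ := mem_image.1 (Finsupp.mapDomain_support (Finsupp.mem_support_iff.2 hα))
    intro l
    rw [AddMonoidHom.single_apply, partialSums_single, partialSums_single]
    split_ifs
    · exact hp.1 m (Finsupp.mem_support_iff.1 hm)
    · rfl
  · exact (Finsupp.mapDomain_apply (Pi.single_injective (M := fun _ => ℤ) i) p.coeff k).trans hp.2

theorem hasLead_prod_inVar {p : Fin n → R[T;T⁻¹]} {d : Fin n → ℤ} {c : Fin n → R}
    (hp : ∀ i, HasLead (AddMonoidHom.id ℤ) (p i) (d i) (c i)) :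
    HasLead (partialSums n) (∏ i, inVar i (p i)) d (∏ i, c i) := by
  have h := HasLead.prod partialSums_injective fun i (_ : i ∈ univ) => (hp i).inVar i
  rwa [univ_sum_single d] at h

variable (n) in
/-- The leading exponent of the Vandermonde products below, which is `(n - 1, …, 1, 0)`. -/
def staircase : Fin n → ℤ := ∑ i, ∑ _j ∈ Ioi i, Pi.single i 1

theorem hasLead_prod_inVar_sub_inVar {p : Fin n → R[T;T⁻¹]} {c : Fin n → R}
    (hp : ∀ i, HasLead (AddMonoidHom.id ℤ) (p i) 1 (c i)) :
    HasLead (partialSums n) (∏ i, ∏ j ∈ Ioi i, (inVar i (p i) - inVar j (p j))) (staircase n)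
      (∏ i, c i ^ (n - 1 - (i : ℕ))) := by
  have h := HasLead.prod partialSums_injective fun i (_ : i ∈ univ) =>
    HasLead.prod partialSums_injective fun j (hj : j ∈ Ioi i) =>
      ((hp i).inVar i).sub (((hp j).inVar j).of_lt (partialSums_single_lt (mem_Ioi.1 hj)))
  simpa [staircase] using h

variable (R) in
theorem hasLead_T (k : ℤ) : HasLead (AddMonoidHom.id ℤ) (T k : R[T;T⁻¹]) k 1 := .single k 1

theorem hasLead_smul_T_add_smul_T (a b : R) :
    HasLead (AddMonoidHom.id ℤ) (a • T (-1) + b • T 1 : R[T;T⁻¹]) 1 b := by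
  simpa using (((hasLead_T R (-1)).of_lt (κ' := 1) (by decide)).smul a).add ((hasLead_T R 1).smul b)

theorem hasLead_invertVars_vandermondeProd (t : R) (ε : Fin n → Bool) :
    HasLead (partialSums n) (invertVars ε (vandermondeProd (invAddMul t))) (staircase n)
      (∏ i, (if ε i then 1 else t) ^ (n - 1 - (i : ℕ))) := by
  simp only [vandermondeProd, map_prod, map_sub, invertVars_inVar]
  refine hasLead_prod_inVar_sub_inVar fun i => ?_
  split
  · simpa [invAddMul, add_comm] using hasLead_smul_T_add_smul_T t 1
  · simpa [invAddMul] using hasLead_smul_T_add_smul_T 1 t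

theorem hasLead_weylDenom :
    HasLead (partialSums n) (weylDenom R n) ((fun _ => 1) + staircase n) 1 := by
  have difference : HasLead (AddMonoidHom.id ℤ) (T 1 - T (-1) : R[T;T⁻¹]) 1 1 := by
    simpa [neg_add_eq_sub] using hasLead_smul_T_add_smul_T (-1 : R) 1
  have sum : HasLead (AddMonoidHom.id ℤ) (T 1 + T (-1) : R[T;T⁻¹]) 1 1 := by
    simpa [add_comm] using hasLead_smul_T_add_smul_T (1 : R) 1
  simpa only [weylDenom, vandermondeProd, prod_const_one, one_pow, mul_one] using
    (hasLead_prod_inVar fun _ => difference).mul partialSums_injective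
      (hasLead_prod_inVar_sub_inVar (n := n) fun _ => sum)

end PartialSums

section Invariants

/-- The Laurent polynomial `r` is invariant under permutations and inversions of the variables. -/
structure IsBCInvariant {R ι : Type*} [CommRing R] (r : R[ι → ℤ]) : Prop where
  permVars_eq : ∀ σ, permVars σ r = r
  invertVars_eq : ∀ ε, invertVars ε r = r

variable {k : Type*} [Field k] {n : ℕ}

theorem weylDenom_ne_zero : weylDenom k n ≠ 0 := by
  intro h
  simpa [h] using (hasLead_weylDenom (R := k) (n := n)).2

theorem exists_alternation_eq_weylDenom_mul [CharZero k] {r : k[Fin n → ℤ]}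
    (hr : ∀ σ, permVars σ r = Equiv.Perm.sign σ • r) :
    ∃ g, IsBCInvariant g ∧ alternation k r = weylDenom k n * g := by
  obtain ⟨g, hg⟩ := weylDenom_dvd_alternation hr
  have cancel {g' : k[Fin n → ℤ]} (u : ℤˣ) (h : u • alternation k r = u • weylDenom k n * g') :
      g' = g := by
    rw [hg, smul_mul_assoc, smul_left_cancel_iff] at h
    exact (mul_left_cancel₀ weylDenom_ne_zero h).symm
  refine ⟨g, ⟨fun σ => cancel (Equiv.Perm.sign σ) ?_, fun ε => cancel (signOf ε) ?_⟩, hg⟩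
  · rw [← permVars_weylDenom, ← map_mul, ← hg, permVars_alternation, hr, Units.smul_def,
      Units.smul_def, map_zsmul]
  · rw [← invertVars_weylDenom, ← map_mul, ← hg, invertVars_alternation]

end Invariants

section Orbits

variable {R : Type*} [CommRing R] {n : ℕ}

theorem mem_signedOrbit {κ α : Fin n → ℤ} :
    α ∈ signedOrbit n κ ↔ ∃ (σ : Equiv.Perm (Fin n)) (ε : Fin n → Bool), negOn ε (κ ∘ σ) = α := by
  simp only [signedOrbit, mem_image, mem_univ, true_and, Prod.exists, funext_iff, negOn_apply,
    comp_apply]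

theorem self_mem_signedOrbit (κ : Fin n → ℤ) : κ ∈ signedOrbit n κ :=
  mem_signedOrbit.2 ⟨1, fun _ => false, funext fun i => negOn_apply _ _ i⟩

theorem negOn_mem_signedOrbit {κ α : Fin n → ℤ} (ε : Fin n → Bool) (h : α ∈ signedOrbit n κ) :
    negOn ε α ∈ signedOrbit n κ := by
  obtain ⟨σ, δ, rfl⟩ := mem_signedOrbit.1 h
  exact mem_signedOrbit.2 ⟨σ, _, (negOn_negOn ε δ _).symm⟩

theorem comp_mem_signedOrbit {κ α : Fin n → ℤ} (τ : Equiv.Perm (Fin n))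
    (h : α ∈ signedOrbit n κ) : α ∘ τ ∈ signedOrbit n κ := by
  obtain ⟨σ, δ, rfl⟩ := mem_signedOrbit.1 h
  refine mem_signedOrbit.2 ⟨σ * τ, δ ∘ τ, ?_⟩
  ext i
  simp [negOn_apply]

theorem partialSums_comp_perm_le {κ : Fin n → ℤ} (hκ : Antitone κ) (σ : Equiv.Perm (Fin n)) :
    partialSums n (κ ∘ σ) ≤ partialSums n κ := by
  intro k
  have monovary : Monovary (fun i : Fin n => if (i : ℕ) < k then (1 : ℤ) else 0) κ := by
    intro i j h
    have hji : (j : ℕ) < i := hκ.reflect_lt h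
    dsimp only
    split_ifs <;> lia
  simpa [partialSums_apply, sum_filter, ite_mul] using
    monovary.sum_mul_comp_perm_le_sum_mul (σ := σ)

theorem partialSums_le_of_mem_signedOrbit {lam : Fin n → ℕ} (hlam : IsPartition lam)
    {α : Fin n → ℤ} (h : α ∈ signedOrbit n (natToZ lam)) :
    partialSums n α ≤ partialSums n (natToZ lam) := by
  obtain ⟨σ, ε, rfl⟩ := mem_signedOrbit.1 h
  refine le_trans (fun k => ?_)
    (partialSums_comp_perm_le (fun i j hij => Nat.cast_le.2 (hlam hij)) σ)
  rw [partialSums_apply, partialSums_apply]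
  refine sum_le_sum fun i _ => ?_
  rw [negOn_apply, comp_apply, natToZ]
  split <;> lia

theorem exists_isPartition_mem_signedOrbit (α : Fin n → ℤ) :
    ∃ μ : Fin n → ℕ, IsPartition μ ∧ α ∈ signedOrbit n (natToZ μ) := by
  let σ := Tuple.sort fun i => OrderDual.toDual (α i).natAbs
  refine ⟨fun i => (α (σ i)).natAbs, Tuple.monotone_sort fun i => OrderDual.toDual (α i).natAbs,
    mem_signedOrbit.2 ⟨σ.symm, fun i => decide (α i < 0), ?_⟩⟩
  ext i
  simp only [negOn_apply, natToZ, comp_apply, decide_eq_true_eq, Equiv.apply_symm_apply]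
  split <;> lia

theorem eq_of_mem_signedOrbit {α : Fin n → ℤ} {μ ν : Fin n → ℕ} (hμ : IsPartition μ)
    (hν : IsPartition ν) (hαμ : α ∈ signedOrbit n (natToZ μ))
    (hαν : α ∈ signedOrbit n (natToZ ν)) : μ = ν := by
  obtain ⟨σ, ε, hσ⟩ := mem_signedOrbit.1 hαμ
  obtain ⟨τ, δ, hτ⟩ := mem_signedOrbit.1 hαν
  have comp_eq (i : Fin n) : μ (σ i) = ν (τ i) := by
    have h := congrFun (hσ.trans hτ.symm) i
    simp only [negOn_apply, comp_apply, natToZ] at h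
    split_ifs at h <;> lia
  have eq_comp : μ = ν ∘ (τ * σ⁻¹ : Equiv.Perm (Fin n)) := by
    ext i
    simpa using comp_eq (σ⁻¹ i)
  rw [eq_comp, Tuple.unique_antitone (f := ν) (σ := τ * σ⁻¹) (τ := 1) (eq_comp ▸ hμ) hν]
  rfl

theorem IsBCInvariant.coeff_eq_of_mem_signedOrbit {g : R[Fin n → ℤ]} (hg : IsBCInvariant g)
    {κ α : Fin n → ℤ} (h : α ∈ signedOrbit n κ) : g.coeff α = g.coeff κ := by
  obtain ⟨σ, ε, rfl⟩ := mem_signedOrbit.1 h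
  rw [← coeff_invertVars, hg.invertVars_eq]
  nth_rw 1 [← hg.permVars_eq σ]
  rw [coeff_permVars, comp_assoc, Equiv.self_comp_symm, comp_id]

variable (R) in
/-- The `BC_n`-symmetric monomial `m_κ` as an element of the Laurent polynomial ring. -/
noncomputable def orbitSum (κ : Fin n → ℤ) : R[Fin n → ℤ] :=
  ∑ α ∈ signedOrbit n κ, .single α 1

theorem coeff_orbitSum (κ α : Fin n → ℤ) :
    (orbitSum R κ).coeff α = if α ∈ signedOrbit n κ then 1 else 0 := by
  simp [orbitSum, AddMonoidAlgebra.coeff_sum, Finsupp.single_apply]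

theorem isBCInvariant_orbitSum (κ : Fin n → ℤ) : IsBCInvariant (orbitSum R κ) where
  permVars_eq σ := by
    ext α
    have h : α ∘ σ.symm ∈ signedOrbit n κ ↔ α ∈ signedOrbit n κ :=
      ⟨fun h => by simpa [comp_assoc] using comp_mem_signedOrbit σ h, comp_mem_signedOrbit σ.symm⟩
    simp only [coeff_permVars, coeff_orbitSum, h]
  invertVars_eq ε := by
    ext α
    have h : negOn ε α ∈ signedOrbit n κ ↔ α ∈ signedOrbit n κ :=
      ⟨fun h => by simpa only [negOn_negOn_self] using negOn_mem_signedOrbit ε h,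
         negOn_mem_signedOrbit ε⟩
    simp only [coeff_invertVars, coeff_orbitSum, h]

theorem hasLead_invertVars_scaleVars_orbitSum {lam : Fin n → ℕ} (hlam : IsPartition lam)
    (s : Rˣ) (ε : Fin n → Bool) :
    HasLead (partialSums n) (invertVars ε (scaleVars s (orbitSum R (natToZ lam)))) (natToZ lam)
      (∏ i, s ^ (if ε i then -(lam i : ℤ) else lam i) : Rˣ) := by
  constructor
  · intro α hα
    rw [coeff_invertVars, coeff_scaleVars, coeff_orbitSum] at hα
    have h := (ite_ne_right_iff.1 (left_ne_zero_of_mul hα)).1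
    simpa only [negOn_negOn_self] using
      partialSums_le_of_mem_signedOrbit hlam (negOn_mem_signedOrbit ε h)
  · rw [coeff_invertVars, coeff_scaleVars, coeff_orbitSum,
      if_pos (negOn_mem_signedOrbit ε (self_mem_signedOrbit _)), one_mul]
    simp only [negOn_apply, natToZ]

theorem natToZ_injective : Injective (natToZ (n := n)) :=
  fun _ _ h => funext fun i => Nat.cast_injective (congrFun h i)

open Classical in
/-- The coefficients of `g` at the partitions, which determine `g` when it is invariant. -/
noncomputable def partitionCoeff (g : R[Fin n → ℤ]) : (Fin n → ℕ) →₀ R :=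
  (g.coeff.comapDomain natToZ natToZ_injective.injOn).filter IsPartition

theorem partitionCoeff_of_isPartition (g : R[Fin n → ℤ]) {μ : Fin n → ℕ} (hμ : IsPartition μ) :
    partitionCoeff g μ = g.coeff (natToZ μ) := by
  classical
  rw [partitionCoeff, Finsupp.filter_apply_pos _ _ hμ, Finsupp.comapDomain_apply]

theorem isPartition_of_mem_support_partitionCoeff {g : R[Fin n → ℤ]} {μ : Fin n → ℕ}
    (hμ : μ ∈ (partitionCoeff g).support) : IsPartition μ := by
  classical
  exact (mem_filter.1 hμ).2

theorem IsBCInvariant.sum_partitionCoeff_smul_orbitSum {g : R[Fin n → ℤ]} (hg : IsBCInvariant g) :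
    ((partitionCoeff g).sum fun μ a => a • orbitSum R (natToZ μ)) = g := by
  ext α
  obtain ⟨μ, hμ, hα⟩ := exists_isPartition_mem_signedOrbit α
  simp only [Finsupp.sum, AddMonoidAlgebra.coeff_sum, Finsupp.finsetSum_apply,
    AddMonoidAlgebra.coeff_smul, Finsupp.smul_apply, coeff_orbitSum, smul_eq_mul]
  rw [sum_eq_single μ, if_pos hα, mul_one, partitionCoeff_of_isPartition g hμ,
    hg.coeff_eq_of_mem_signedOrbit hα]
  · intro ν hν hne
    rw [if_neg fun h => hne (eq_of_mem_signedOrbit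
      (isPartition_of_mem_support_partitionCoeff hν) hμ h hα), mul_zero]
  · intro h
    rw [Finsupp.notMem_support_iff.1 h, zero_mul]

end Orbits

section Numerator

variable {R : Type*} [CommRing R] {n d : ℕ}

/-- The Laurent polynomial `-z^{-d} ∏ r, (1 - τ_r z)`. Its quotient by `z - z⁻¹` is the weight
`z^{1-d} ∏ r, (1 - τ_r z) / (1 - z²)` of the difference operators. -/
noncomputable def weightNumerator (τ : Fin (2 * d) → R) : R[T;T⁻¹] :=
  -(T (-d) * ∏ r, (1 - τ r • T 1))

/-- The product of the Weyl denominator with the summand of a difference operator on `r` in which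
no variable is inverted. -/
noncomputable def opNumerator (s : Rˣ) (t : R) (τ : Fin (2 * d) → R) (r : R[Fin n → ℤ]) :
    R[Fin n → ℤ] :=
  (∏ i, inVar i (weightNumerator τ)) * vandermondeProd (invAddMul t) * scaleVars s r

theorem hasLead_weightNumerator (τ : Fin (2 * d) → R) :
    HasLead (AddMonoidHom.id ℤ) (weightNumerator τ) d (-∏ r, τ r) := by
  have factor (r : Fin (2 * d)) :
      HasLead (AddMonoidHom.id ℤ) (1 - τ r • T 1 : R[T;T⁻¹]) 1 (-τ r) := by
    simpa using (HasLead.one.of_lt (κ' := 1) (by decide)).sub ((hasLead_T R 1).smul (τ r))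
  have h := ((hasLead_T R (-d)).mul injective_id
    (HasLead.prod injective_id fun r (_ : r ∈ univ) => factor r)).smul (-1 : ℤ)
  convert h using 1
  · rw [weightNumerator, neg_one_zsmul]
  · simp only [sum_const, card_univ, Fintype.card_fin, nsmul_eq_mul]
    push_cast
    ring
  · simp [prod_neg, pow_mul]

theorem hasLead_invert_weightNumerator (τ : Fin (2 * d) → R) :
    HasLead (AddMonoidHom.id ℤ) (LaurentPolynomial.invert (weightNumerator τ)) d (-1) := by
  have factor (r : Fin (2 * d)) :
      HasLead (AddMonoidHom.id ℤ) (1 - τ r • T (-1) : R[T;T⁻¹]) 0 1 := by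
    simpa using HasLead.one.sub (((hasLead_T R (-1)).of_lt (κ' := 0) (by decide)).smul (τ r))
  have h := ((hasLead_T R d).mul injective_id
    (HasLead.prod injective_id fun r (_ : r ∈ univ) => factor r)).smul (-1 : ℤ)
  convert h using 1
  · simp only [weightNumerator, map_neg, map_mul, map_prod, map_sub, map_one, map_smul,
      LaurentPolynomial.invert_T, neg_neg, neg_one_zsmul]
  · simp
  · simp

theorem permVars_opNumerator (s : Rˣ) (t : R) (τ : Fin (2 * d) → R) {r : R[Fin n → ℤ]}
    (σ : Equiv.Perm (Fin n)) (hr : permVars σ r = r) :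
    permVars σ (opNumerator s t τ r) = Equiv.Perm.sign σ • opNumerator s t τ r := by
  simp only [opNumerator, map_mul, map_prod, permVars_inVar, permVars_vandermondeProd,
    permVars_scaleVars, hr]
  rw [Equiv.prod_comp σ⁻¹ fun i => inVar i (weightNumerator τ), mul_smul_comm, smul_mul_assoc]

theorem hasLead_invertVars_opNumerator_orbitSum (s : Rˣ) (t : R) (τ : Fin (2 * d) → R)
    {lam : Fin n → ℕ} (hlam : IsPartition lam) (ε : Fin n → Bool) :
    HasLead (partialSums n) (invertVars ε (opNumerator s t τ (orbitSum R (natToZ lam))))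
      ((fun _ => (d : ℤ)) + staircase n + natToZ lam)
      (∏ i, (if ε i then -1 else -∏ r, τ r) * (if ε i then 1 else t) ^ (n - 1 - (i : ℕ)) *
        (s ^ (if ε i then -(lam i : ℤ) else lam i) : Rˣ)) := by
  have weight (i : Fin n) : HasLead (AddMonoidHom.id ℤ)
      (if ε i then LaurentPolynomial.invert (weightNumerator τ) else weightNumerator τ) d
      (if ε i then -1 else -∏ r, τ r) := by
    split
    exacts [hasLead_invert_weightNumerator τ, hasLead_weightNumerator τ]
  rw [prod_mul_distrib, prod_mul_distrib, ← Units.coe_prod]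
  simp only [opNumerator, map_mul, map_prod, invertVars_inVar]
  exact ((hasLead_prod_inVar weight).mul partialSums_injective
    (hasLead_invertVars_vandermondeProd t ε)).mul partialSums_injective
    (hasLead_invertVars_scaleVars_orbitSum hlam s ε)

theorem hasLead_alternation_opNumerator_orbitSum (s : Rˣ) (t : R) (τ : Fin (2 * d) → R)
    {lam : Fin n → ℕ} (hlam : IsPartition lam) :
    HasLead (partialSums n) (alternation R (opNumerator s t τ (orbitSum R (natToZ lam))))
      ((fun _ => (d : ℤ)) + staircase n + natToZ lam)
      (∏ i, ((s⁻¹ ^ lam i : Rˣ) - (s ^ lam i : Rˣ) * t ^ (n - 1 - (i : ℕ)) * ∏ r, τ r)) := by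
  have factor (i : Fin n) :
      ((s⁻¹ ^ lam i : Rˣ) - (s ^ lam i : Rˣ) * t ^ (n - 1 - (i : ℕ)) * ∏ r, τ r : R) =
        ∑ b : Bool, ((if b then -1 else 1 : ℤˣ) : ℤ) * ((if b then -1 else -∏ r, τ r) *
          (if b then 1 else t) ^ (n - 1 - (i : ℕ)) *
          (s ^ (if b then -(lam i : ℤ) else lam i) : Rˣ)) := by
    simp only [Fintype.sum_bool, if_true, Bool.false_eq_true, if_false, Units.val_neg,
      Units.val_one, Int.cast_neg, Int.cast_one, one_pow, zpow_neg, zpow_natCast, inv_pow]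
    ring
  simp only [factor, Fintype.prod_sum]
  rw [alternation_apply]
  refine HasLead.sum fun ε _ => ?_
  convert (hasLead_invertVars_opNumerator_orbitSum s t τ hlam ε).smul (signOf ε) using 1
  rw [prod_mul_distrib, Units.smul_def, zsmul_eq_mul, signOf, Units.coe_prod, Int.cast_prod]

end Numerator

section Evaluation

variable {n d : ℕ}

theorem signFlip_coe (ε : Fin n → Bool) (u : Fin n → ℂˣ) :
    signFlip ε (fun i => (u i : ℂ)) = fun i => ((if ε i then (u i)⁻¹ else u i : ℂˣ) : ℂ) := by
  ext i
  simp only [signFlip]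
  split <;> simp

theorem eval_weylDenom (u : Fin n → ℂˣ) : eval u (weylDenom ℂ n) =
    (∏ i, (u i - (u i : ℂ)⁻¹)) * eval u (vandermondeProd (T 1 + T (-1))) := by
  simp [weylDenom, eval_inVar]

theorem eval_vandermondeProd_sum (u : Fin n → ℂˣ) : eval u (vandermondeProd (T 1 + T (-1))) =
    ∏ i, ∏ j ∈ Ioi i, ((u j : ℂ) - u i) * (1 - u i * u j) / (u i * u j) := by
  simp only [vandermondeProd, map_prod, map_sub, eval_inVar, map_add, LaurentPolynomial.eval₂_T]
  refine prod_congr rfl fun i _ => prod_congr rfl fun j _ => ?_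
  have := (u i).ne_zero
  have := (u j).ne_zero
  simp only [zpow_one, zpow_neg, Units.val_inv_eq_inv_val]
  field_simp
  ring

theorem zGood_iff_eval_weylDenom_ne_zero (u : Fin n → ℂˣ) :
    ZGood (fun i => (u i : ℂ)) ↔ eval u (weylDenom ℂ n) ≠ 0 := by
  have sub_inv (i : Fin n) : (u i - (u i : ℂ)⁻¹) ≠ 0 ↔ (u i : ℂ) ^ 2 ≠ 1 := by
    rw [sub_ne_zero, ne_eq, ← mul_inv_eq_one₀ (inv_ne_zero (u i).ne_zero), inv_inv, sq]
  have pair (i j : Fin n) : (((u j : ℂ) - u i) * (1 - u i * u j) / (u i * u j)) ≠ 0 ↔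
      (u i * u j : ℂ) ≠ 1 ∧ (u i : ℂ) ≠ u j := by
    rw [div_ne_zero_iff, mul_ne_zero_iff, sub_ne_zero, sub_ne_zero]
    exact ⟨fun h => ⟨h.1.2.symm, h.1.1.symm⟩, fun h => ⟨⟨h.2.symm, h.1.symm⟩,
      mul_ne_zero (u i).ne_zero (u j).ne_zero⟩⟩
  rw [eval_weylDenom, eval_vandermondeProd_sum]
  simp only [mul_ne_zero_iff (M₀ := ℂ) (a := ∏ _i, _), prod_ne_zero_iff, mem_univ, true_imp_iff,
    sub_inv, pair, mem_Ioi, ZGood]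
  refine ⟨fun h => ⟨h.2.1, fun i j hij => h.2.2 i j hij.ne⟩,
    fun h => ⟨fun i => (u i).ne_zero, h.1, fun i j hij => ?_⟩⟩
  rcases hij.lt_or_gt with hij | hij
  · exact h.2 i j hij
  · rw [mul_comm, ne_comm (a := (u i : ℂ))]
    exact h.2 j i hij

theorem eval_weylDenom_eq_signOf_smul (u : Fin n → ℂˣ) (ε : Fin n → Bool) :
    eval u (weylDenom ℂ n) =
      signOf ε • eval (fun i => if ε i then (u i)⁻¹ else u i) (weylDenom ℂ n) := by
  rw [← eval_invertVars, invertVars_weylDenom, Units.smul_def, Units.smul_def, map_zsmul,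
    ← Units.smul_def, ← Units.smul_def, smul_smul, Int.units_mul_self, one_smul]

theorem crossFactor_eq_prod_Ioi (t : ℂ) (w : Fin n → ℂ) :
    crossFactor t w = ∏ i, ∏ j ∈ Ioi i, (1 - t * w i * w j) / (1 - w i * w j) := by
  refine prod_congr rfl fun i _ => ?_
  rw [← prod_filter, filter_lt_eq_Ioi]

theorem eval_vandermondeProd_invAddMul (t : ℂ) {u : Fin n → ℂˣ} (hu : ZGood fun i => (u i : ℂ)) :
    eval u (vandermondeProd (invAddMul t)) =
      eval u (vandermondeProd (T 1 + T (-1))) * crossFactor t fun i => (u i : ℂ) := by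
  simp only [eval_vandermondeProd_sum, crossFactor_eq_prod_Ioi, ← prod_mul_distrib]
  simp only [vandermondeProd, invAddMul, map_prod, map_sub, eval_inVar, map_add,
    LaurentPolynomial.smul_eq_C_mul, LaurentPolynomial.eval₂_C_mul_T, LaurentPolynomial.eval₂_T,
    RingHom.id_apply, zpow_neg_one, zpow_one, Units.val_inv_eq_inv_val]
  refine prod_congr rfl fun i _ => prod_congr rfl fun j hj => ?_
  have := (u i).ne_zero
  have := (u j).ne_zero
  have : (1 - u i * u j : ℂ) ≠ 0 := sub_ne_zero.2 (hu.2.2 i j (mem_Ioi.1 hj).ne).1.symm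
  field_simp
  ring

theorem eval_weightNumerator (τ : Fin (2 * d) → ℂ) {u : ℂˣ} (hu : (u : ℂ) ^ 2 ≠ 1) :
    LaurentPolynomial.eval₂ (RingHom.id ℂ) u (weightNumerator τ) =
      (u - (u : ℂ)⁻¹) * ((∏ r, (1 - τ r * u)) * (u : ℂ) ^ (1 - (d : ℤ)) / (1 - (u : ℂ) ^ 2)) := by
  have := u.ne_zero
  have : (1 - u ^ 2 : ℂ) ≠ 0 := sub_ne_zero.2 hu.symm
  simp only [weightNumerator, map_neg, map_mul, map_prod, map_sub, map_one,
    LaurentPolynomial.smul_eq_C_mul, LaurentPolynomial.eval₂_C, LaurentPolynomial.eval₂_T,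
    RingHom.id_apply, zpow_neg, zpow_one, Units.val_inv_eq_inv_val, Units.val_zpow_eq_zpow_val,
    zpow_sub₀ u.ne_zero]
  generalize ∏ r, (1 - τ r * (u : ℂ)) = a
  field_simp
  ring

theorem eval_opNumerator (s : ℂˣ) (t : ℂ) (τ : Fin (2 * d) → ℂ) (r : ℂ[Fin n → ℤ])
    {u : Fin n → ℂˣ} (hu : ZGood fun i => (u i : ℂ)) :
    eval u (opNumerator s t τ r) = eval u (weylDenom ℂ n) *
      ((∏ i, (∏ r, (1 - τ r * u i)) * (u i : ℂ) ^ (1 - (d : ℤ)) / (1 - (u i : ℂ) ^ 2)) *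
        (crossFactor t fun i => (u i : ℂ)) * eval (fun i => s * u i) r) := by
  simp only [opNumerator, map_mul, map_prod, eval_inVar, eval_weightNumerator τ (hu.2.1 _),
    eval_vandermondeProd_invAddMul t hu, eval_scaleVars, eval_weylDenom]
  rw [prod_mul_distrib]
  ring

/-- The family `D^{(n)}_q(τ_1,…,τ_{2d};t)` of difference operators, with `s` a square root of `q`,
whose members with `d = 0, 1, 2` are `Dminus`, `Dmid` and `Dplus`. -/
noncomputable def diffOp (n d : ℕ) (s t : ℂ) (τ : Fin (2 * d) → ℂ) (f : (Fin n → ℂ) → ℂ)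
    (z : Fin n → ℂ) : ℂ :=
  ∑ ε : Fin n → Bool,
    (∏ i, (∏ r, (1 - τ r * signFlip ε z i)) * signFlip ε z i ^ (1 - (d : ℤ)) /
        (1 - signFlip ε z i ^ 2)) *
      crossFactor t (signFlip ε z) * f fun i => s * signFlip ε z i

theorem Dminus_eq_diffOp (s t : ℂ) : Dminus n s t = diffOp n 0 s t ![] := by
  ext f z
  simp [Dminus, diffOp]

theorem Dmid_eq_diffOp (s t₀ t₁ t : ℂ) : Dmid n s t₀ t₁ t = diffOp n 1 s t ![t₀, t₁] := by
  ext f z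
  simp [Dmid, diffOp, Fin.prod_univ_two]

theorem Dplus_eq_diffOp (s t₀ t₁ t₂ t₃ t : ℂ) :
    Dplus n s t₀ t₁ t₂ t₃ t = diffOp n 2 s t ![t₀, t₁, t₂, t₃] := by
  ext f z
  simp [Dplus, diffOp, Fin.prod_univ_four, div_eq_mul_inv, mul_assoc, mul_comm, mul_left_comm]

/-- The Laurent polynomial `r` represents the function `f` at the points of the torus. -/
def Represents (r : ℂ[Fin n → ℤ]) (f : (Fin n → ℂ) → ℂ) : Prop :=
  ∀ u : Fin n → ℂˣ, f (fun i => u i) = eval u r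

theorem Represents.diffOp {r g : ℂ[Fin n → ℤ]} {f : (Fin n → ℂ) → ℂ} (hf : Represents r f)
    {s : ℂˣ} {t : ℂ} {τ : Fin (2 * d) → ℂ}
    (hg : alternation ℂ (opNumerator s t τ r) = weylDenom ℂ n * g) {u : Fin n → ℂˣ}
    (hu : ZGood fun i => (u i : ℂ)) : diffOp n d s t τ f (fun i => u i) = eval u g := by
  have eval_ne := (zGood_iff_eval_weylDenom_ne_zero u).1 hu
  apply mul_left_cancel₀ eval_ne
  rw [← map_mul, ← hg, alternation_apply, map_sum, BCLaurent.diffOp, mul_sum]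
  refine sum_congr rfl fun ε _ => ?_
  rw [Units.smul_def, map_zsmul, ← Units.smul_def, eval_invertVars, signFlip_coe]
  rw [eval_weylDenom_eq_signOf_smul u ε] at eval_ne ⊢
  generalize hw : (fun i => if ε i then (u i)⁻¹ else u i) = w at eval_ne ⊢
  simp only [congrFun hw]
  have good : ZGood fun i => (w i : ℂ) :=
    (zGood_iff_eval_weylDenom_ne_zero w).2 fun h => eval_ne (by rw [h, smul_zero])
  rw [eval_opNumerator s t τ r good, smul_mul_assoc, ← hf]
  rfl

end Evaluation

section Representation

variable {n d : ℕ}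

theorem eval_eq_sum (u : Fin n → ℂˣ) (r : ℂ[Fin n → ℤ]) :
    eval u r = r.coeff.sum fun α a => a * ∏ i, (u i : ℂ) ^ α i := by
  simp [eval, AddMonoidAlgebra.lift_apply]

theorem represents_coeff_sum (r : ℂ[Fin n → ℤ]) :
    Represents r fun z => r.coeff.sum fun α a => a * ∏ i, z i ^ α i :=
  fun u => (eval_eq_sum u r).symm

theorem represents_orbitSum (κ : Fin n → ℤ) : Represents (orbitSum ℂ κ) (bcMono n κ) := by
  intro u
  simp [orbitSum, bcMono, eval_single]

theorem Represents.isBCSymmetric {g : ℂ[Fin n → ℤ]} {f : (Fin n → ℂ) → ℂ} (hf : Represents g f)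
    (hg : IsBCInvariant g) : IsBCSymmetric n f := by
  refine ⟨⟨g.coeff, fun z hz => ?_⟩, fun σ z hz => ?_, fun k z hz => ?_⟩ <;>
    lift z to Fin n → ℂˣ using fun i => (hz i).isUnit
  · exact (hf z).trans (eval_eq_sum z g)
  · have h := eval_permVars z σ.symm g
    rw [hg.permVars_eq] at h
    exact (hf (z ∘ σ)).trans (h.symm.trans (hf z).symm)
  · have h := eval_invertVars z (fun i => decide (i = k)) g
    rw [hg.invertVars_eq] at h
    rw [hf z, h, ← hf]
    congr 1
    ext i
    obtain rfl | hi := eq_or_ne i k <;> simp [*]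

theorem exists_permVars_eq_and_represents {f : (Fin n → ℂ) → ℂ} (hf : IsLaurent n f)
    (hperm : ∀ (σ : Equiv.Perm (Fin n)) z, (∀ i, z i ≠ 0) → f (z ∘ σ) = f z) :
    ∃ r, (∀ σ, permVars σ r = r) ∧ Represents r f := by
  obtain ⟨c, hc⟩ := hf
  let r : ℂ[Fin n → ℤ] := .ofCoeff c
  have hr : Represents r f := fun u => (hc _ fun i => (u i).ne_zero).trans (eval_eq_sum u r).symm
  have card_ne : (Fintype.card (Equiv.Perm (Fin n)) : ℂ) ≠ 0 :=
    Nat.cast_ne_zero.2 Fintype.card_ne_zero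
  refine ⟨(Fintype.card (Equiv.Perm (Fin n)) : ℂ)⁻¹ • ∑ σ, permVars σ r, fun τ => ?_, fun u => ?_⟩
  · simp only [map_smul, map_sum, permVars_permVars]
    exact congrArg _ (Equiv.sum_comp (Equiv.mulRight τ) fun σ => permVars σ r)
  · have eval_perm (σ : Equiv.Perm (Fin n)) : eval u (permVars σ r) = f fun i => u i := by
      rw [eval_permVars, ← hr]
      exact hperm σ.symm _ fun i => (u i).ne_zero
    simp only [map_smul, map_sum, eval_perm, sum_const, card_univ, smul_eq_mul, nsmul_eq_mul]
    rw [inv_mul_cancel_left₀ card_ne]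

theorem exists_isBCInvariant_alternation_opNumerator_eq (s : ℂˣ) (t : ℂ) (τ : Fin (2 * d) → ℂ)
    {r : ℂ[Fin n → ℤ]} (hr : ∀ σ, permVars σ r = r) :
    ∃ g, IsBCInvariant g ∧ alternation ℂ (opNumerator s t τ r) = weylDenom ℂ n * g :=
  exists_alternation_eq_weylDenom_mul fun σ => permVars_opNumerator s t τ σ (hr σ)

theorem HasLead.expandsWithLead {F : (Fin n → ℂ) → ℂ} {g : ℂ[Fin n → ℤ]} {κ : Fin n → ℤ} {c : ℂ}
    (hlead : HasLead (partialSums n) g κ c) (hg : IsBCInvariant g)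
    (hF : ∀ u : Fin n → ℂˣ, ZGood (fun i => (u i : ℂ)) → F (fun i => u i) = eval u g)
    (hκ : (∃ μ, IsPartition μ ∧ natToZ μ = κ) ∨ c = 0) : ExpandsWithLead n F c κ := by
  classical
  have F_eq_sum (z : Fin n → ℂ) (hz : ZGood z) :
      F z = (partitionCoeff g).sum fun μ a => a * bcMono n (natToZ μ) z := by
    lift z to Fin n → ℂˣ using fun i => (hz.1 i).isUnit
    rw [hF z hz]
    nth_rw 1 [← hg.sum_partitionCoeff_smul_orbitSum]
    simp only [Finsupp.sum, map_sum, map_smul, smul_eq_mul, represents_orbitSum _ z]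
  have dominates {μ : Fin n → ℕ} (hμ : μ ∈ (partitionCoeff g).support) :
      IsPartition μ ∧ Dominates κ (natToZ μ) := by
    have partition := isPartition_of_mem_support_partitionCoeff hμ
    rw [Finsupp.mem_support_iff, partitionCoeff_of_isPartition g partition] at hμ
    exact ⟨partition, hlead.1 _ hμ⟩
  by_cases h : ∃ μ, IsPartition μ ∧ natToZ μ = κ
  · obtain ⟨μ, hμ, rfl⟩ := h
    refine ⟨(partitionCoeff g).erase μ, fun ν hν => ?_, fun z hz => ?_⟩
    · rw [Finsupp.support_erase, mem_erase] at hν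
      obtain ⟨partition, dom⟩ := dominates hν.2
      exact ⟨partition, dom, natToZ_injective.ne hν.1⟩
    · rw [F_eq_sum z hz, ← Finsupp.add_sum_erase' _ μ _ fun _ => zero_mul _,
        partitionCoeff_of_isPartition g hμ, hlead.2]
  · refine ⟨partitionCoeff g, fun ν hν => ?_, fun z hz => ?_⟩
    · obtain ⟨partition, dom⟩ := dominates hν
      exact ⟨partition, dom, fun hνκ => h ⟨ν, partition, hνκ⟩⟩
    · rw [hκ.resolve_left h, zero_mul, zero_add, F_eq_sum z hz]

theorem exists_isPartition_or_leadingCoeff_eq_zero (q t : ℂ) (τ : Fin (2 * d) → ℂ)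
    {lam : Fin n → ℕ} (hlam : IsPartition lam) :
    (∃ μ, IsPartition μ ∧ natToZ μ = fun i => (lam i : ℤ) + ((d : ℤ) - 1)) ∨
      ∏ i : Fin n, (1 - q ^ lam i * t ^ (n - 1 - (i : ℕ)) * ∏ r, τ r) = 0 := by
  by_cases nonneg : ∀ i, 1 ≤ lam i + d
  · refine Or.inl ⟨fun i => lam i + d - 1, fun i j hij => ?_, funext fun i => ?_⟩
    · have := hlam hij
      dsimp only
      lia
    · have := nonneg i
      simp only [natToZ]
      lia
  · right
    push Not at nonneg
    obtain ⟨i, hi⟩ := nonneg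
    obtain rfl : d = 0 := by lia
    let last : Fin n := ⟨n - 1, by have := i.isLt; lia⟩
    have last_eq_zero : lam last = 0 := by
      have := hlam (Fin.le_def.2 (Nat.le_sub_one_of_lt i.isLt) : i ≤ last)
      lia
    refine prod_eq_zero (mem_univ last) ?_
    simp [last_eq_zero, last]

theorem prod_inv_sub_eq (s : ℂˣ) (t a : ℂ) (lam : Fin n → ℕ) :
    ∏ i : Fin n, ((s⁻¹ ^ lam i : ℂˣ) - (s ^ lam i : ℂˣ) * t ^ (n - 1 - (i : ℕ)) * a) =
      (s : ℂ)⁻¹ ^ (∑ i, lam i) * ∏ i : Fin n, (1 - ((s : ℂ) ^ 2) ^ lam i *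
        t ^ (n - 1 - (i : ℕ)) * a) := by
  rw [← prod_pow_eq_pow_sum, ← prod_mul_distrib]
  refine prod_congr rfl fun i _ => ?_
  have := s.ne_zero
  simp only [Units.val_pow_eq_pow_val, Units.val_inv_eq_inv_val, inv_pow, pow_right_comm _ 2]
  field_simp

theorem diffOp_bcMono_expandsWithLead (s : ℂˣ) (t : ℂ) (τ : Fin (2 * d) → ℂ)
    {lam : Fin n → ℕ} (hlam : IsPartition lam) :
    ExpandsWithLead n (diffOp n d s t τ (bcMono n (natToZ lam)))
      ((s : ℂ)⁻¹ ^ (∑ i, lam i) *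
        ∏ i : Fin n, (1 - ((s : ℂ) ^ 2) ^ lam i * t ^ (n - 1 - (i : ℕ)) * ∏ r, τ r))
      (fun i => (lam i : ℤ) + ((d : ℤ) - 1)) := by
  obtain ⟨g, hg, eq_mul⟩ := exists_isBCInvariant_alternation_opNumerator_eq s t τ
    (isBCInvariant_orbitSum (natToZ lam)).permVars_eq
  have lead := hasLead_alternation_opNumerator_orbitSum s t τ hlam
  have exponent : (fun _ => (d : ℤ)) + staircase n + natToZ lam =
      ((fun _ => 1) + staircase n) + fun i => (lam i : ℤ) + ((d : ℤ) - 1) := by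
    ext i
    simp only [Pi.add_apply, natToZ]
    ring
  rw [eq_mul, exponent, prod_inv_sub_eq] at lead
  exact (hasLead_weylDenom.of_mul_left partialSums_injective lead).expandsWithLead hg
    (fun u hu => (represents_orbitSum _).diffOp eq_mul hu)
    ((exists_isPartition_or_leadingCoeff_eq_zero _ t τ hlam).imp_right fun h => by rw [h, mul_zero])

theorem exists_isBCSymmetric_diffOp_eq (s : ℂˣ) (t : ℂ) (τ : Fin (2 * d) → ℂ)
    {f : (Fin n → ℂ) → ℂ} (hf : IsLaurent n f)
    (hperm : ∀ (σ : Equiv.Perm (Fin n)) z, (∀ i, z i ≠ 0) → f (z ∘ σ) = f z) :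
    ∃ g, IsBCSymmetric n g ∧ ∀ z, ZGood z → diffOp n d s t τ f z = g z := by
  obtain ⟨r, perm_eq, hr⟩ := exists_permVars_eq_and_represents hf hperm
  obtain ⟨g, hg, eq_mul⟩ := exists_isBCInvariant_alternation_opNumerator_eq s t τ perm_eq
  refine ⟨_, (represents_coeff_sum g).isBCSymmetric hg, fun z hz => ?_⟩
  lift z to Fin n → ℂˣ using fun i => (hz.1 i).isUnit
  exact (hr.diffOp eq_mul hz).trans (represents_coeff_sum g z).symm

end Representation

end BCLaurent

open BCLaurent in
theorem difference_operators_triangular_general (n d : ℕ) (q sq t : ℂ) (τ : Fin (2 * d) → ℂ)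
    (hsq : sq ^ 2 = q) (hq0 : q ≠ 0) (lam : Fin n → ℕ) (hlam : IsPartition lam) :
    (∀ f, IsLaurent n f →
      (∀ (σ : Equiv.Perm (Fin n)) z, (∀ i, z i ≠ 0) → f (z ∘ σ) = f z) →
      ∃ g, IsBCSymmetric n g ∧ ∀ z, ZGood z → diffOp n d sq t τ f z = g z) ∧
    ExpandsWithLead n (diffOp n d sq t τ (bcMono n (natToZ lam)))
      (sq⁻¹ ^ (∑ i, lam i) *
        ∏ i : Fin n, (1 - q ^ lam i * t ^ (n - 1 - (i : ℕ)) * ∏ r, τ r))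
      (fun i => (lam i : ℤ) + ((d : ℤ) - 1)) := by
  subst hsq
  lift sq to ℂˣ using (pow_ne_zero_iff two_ne_zero).1 hq0 |>.isUnit
  exact ⟨fun f hf hperm => exists_isBCSymmetric_diffOp_eq sq t τ hf hperm,
    diffOp_bcMono_expandsWithLead sq t τ hlam⟩

/-- The difference operators `D^{-(n)}_q(t)`, `D^{(n)}_q(t₀,t₁;t)`, `D^{+(n)}_q(t₀,t₁,t₂,t₃;t)`
take `BC_n`-symmetric Laurent polynomials to `BC_n`-symmetric Laurent polynomials and act
triangularly on the monomials `m_λ`, with the stated leading coefficients. -/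
theorem difference_operators_triangular (n : ℕ) (q sq t t0 t1 t2 t3 : ℂ)
    (hsq : sq ^ 2 = q) (hq0 : q ≠ 0) (lam : Fin n → ℕ) (hlam : IsPartition lam) :
    ((∀ f, IsBCSymmetric n f → ∃ g, IsBCSymmetric n g ∧
        ∀ z, ZGood z → Dminus n sq t f z = g z) ∧
     (∀ f, IsBCSymmetric n f → ∃ g, IsBCSymmetric n g ∧
        ∀ z, ZGood z → Dmid n sq t0 t1 t f z = g z) ∧
     (∀ f, IsBCSymmetric n f → ∃ g, IsBCSymmetric n g ∧
        ∀ z, ZGood z → Dplus n sq t0 t1 t2 t3 t f z = g z)) ∧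
    (ExpandsWithLead n (Dminus n sq t (bcMono n (natToZ lam)))
        (sq⁻¹ ^ (∑ i, lam i) * ∏ i : Fin n, (1 - q ^ lam i * t ^ (n - 1 - (i : ℕ))))
        (fun i => (lam i : ℤ) - 1) ∧
     ExpandsWithLead n (Dmid n sq t0 t1 t (bcMono n (natToZ lam)))
        (sq⁻¹ ^ (∑ i, lam i) *
          ∏ i : Fin n, (1 - q ^ lam i * t ^ (n - 1 - (i : ℕ)) * (t0 * t1)))
        (natToZ lam) ∧
     ExpandsWithLead n (Dplus n sq t0 t1 t2 t3 t (bcMono n (natToZ lam)))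
        (sq⁻¹ ^ (∑ i, lam i) *
          ∏ i : Fin n, (1 - q ^ lam i * t ^ (n - 1 - (i : ℕ)) * (t0 * t1 * t2 * t3)))
        (fun i => (lam i : ℤ) + 1)) := by
  have minus := difference_operators_triangular_general n 0 q sq t ![] hsq hq0 lam hlam
  have mid := difference_operators_triangular_general n 1 q sq t ![t0, t1] hsq hq0 lam hlam
  have plus := difference_operators_triangular_general n 2 q sq t ![t0, t1, t2, t3] hsq hq0 lam hlam
  rw [BCLaurent.Dminus_eq_diffOp, BCLaurent.Dmid_eq_diffOp, BCLaurent.Dplus_eq_diffOp]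
  refine ⟨⟨fun f hf => minus.1 f hf.1 hf.2.1, fun f hf => mid.1 f hf.1 hf.2.1,
    fun f hf => plus.1 f hf.1 hf.2.1⟩, ?_, ?_, ?_⟩
  · simpa [sub_eq_add_neg] using minus.2
  · change ExpandsWithLead n _ _ fun i => (lam i : ℤ)
    simpa [Fin.prod_univ_two] using mid.2
  · simpa [Fin.prod_univ_four] using plus.2
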